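/- arXiv:1409.5822 — 2 statements merged into one kernel-verified Lean document; each statement's English description precedes it below -/
import Mathlib

section
/- Let G be a finite abelian group (written additively) and let H₁, H₂ be subgroups of G of equal cardinality d. Let ω : H₁ × H₂ → ℂ^× be a pairing of groups, i.e. ω(x+x', y) = ω(x,y)ω(x',y) and ω(x, y+y') = ω(x,y)ω(x,y') for all x,x' ∈ H₁, y,y' ∈ H₂. Define g : G × G → ℂ by g(x,y) = (1/d)·ω(x,y) if x ∈ H₁ and y ∈ H₂, and g(x,y) = 0 otherwise. Then g satisfies: for all x,y ∈ G, g(x,y) = Σ_{y₁+y₂=y} g(x,y₁)g(x,y₂) and g(x,y) = Σ_{x₁+x₂=x} g(x₁,y)g(x₂,y); moreover Σ_{y∈G} g(0,y) = 1 and Σ_{x∈G} g(x,0) = 1. -/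
/-!
For fixed `x ∈ H₁` the function `g x` is a character `χ` of `H₂` divided by `d = |H₂|` and extended
by zero, that is, the idempotent of `χ` in the convolution algebra. Every nonzero term
`χ a * χ b` of the convolution square of `χ` at `y` equals `χ y`, and there are `d` of them, whence
the first equation; for `x ∉ H₁` both sides vanish. At `x = 0` the character is trivial, so `g 0` is
the uniform distribution on `H₂`. The other two equations are the same statements about `ω` with
its arguments exchanged.
-/

open Finset

open Function

/-- Convolution of functions on an additive magma, possibly infinite. It is a `finsum`, hence zero
at any point where infinitely many terms are nonzero. -/
noncomputable def addConv {G R : Type*} [Add G] [NonUnitalNonAssocSemiring R] (f g : G → R)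
    (y : G) : R :=
  ∑ᶠ p ∈ {p : G × G | p.1 + p.2 = y}, f p.1 * g p.2

lemma finsum_const_of_finite {α M : Type*} [Finite α] [AddCommMonoid M] (c : M) :
    ∑ᶠ _ : α, c = Nat.card α • c := by
  have := Fintype.ofFinite α
  simp [finsum_eq_sum_of_fintype, Nat.card_eq_fintype_card]

lemma finsum_extend_zero {α β M : Type*} [AddCommMonoid M] {i : α → β} (hi : Injective i)
    (f : α → M) : ∑ᶠ b, extend i f (0 : β → M) b = ∑ᶠ a, f a := by
  have hsupp : support (extend i f (0 : β → M)) ⊆ Set.range i := fun b hb ↦ by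
    by_contra hbi
    exact hb (extend_apply' f (0 : β → M) b hbi)
  calc ∑ᶠ b, extend i f (0 : β → M) b = ∑ᶠ b ∈ Set.range i, extend i f (0 : β → M) b := by
        rw [← finsum_mem_inter_support, Set.inter_eq_right.mpr hsupp, finsum_mem_support]
    _ = ∑ᶠ a, f a := by simp only [finsum_mem_range hi, hi.extend_apply]

section Convolution

variable {G R : Type*} [NonUnitalNonAssocSemiring R]

lemma addConv_eq_sum [Add G] [Fintype G] [DecidableEq G] (f g : G → R) (y : G) :
    addConv f g y = ∑ p : G × G with p.1 + p.2 = y, f p.1 * g p.2 := by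
  simp [addConv, ← finsum_mem_coe_finset]

@[simp]
lemma addConv_zero_left [Add G] (f : G → R) : addConv 0 f = 0 := by
  ext y
  simp [addConv]

lemma addConv_eq_finsum [AddGroup G] (f g : G → R) (y : G) :
    addConv f g y = ∑ᶠ a, f a * g (-a + y) := by
  have hinj : Injective fun a : G ↦ (a, -a + y) := fun _ _ h ↦ congrArg Prod.fst h
  have hrange : {p : G × G | p.1 + p.2 = y} = Set.range fun a : G ↦ (a, -a + y) := by
    ext ⟨a, b⟩
    simp [eq_neg_add_iff_add_eq, eq_comm]
  rw [addConv, hrange, finsum_mem_range hinj]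

lemma addConv_extend_zero {H F : Type*} [Add G] [Add H] [FunLike F H G] [AddHomClass F H G]
    (i : F) (hi : Injective i) (f g : H → R) :
    addConv (extend i f 0) (extend i g 0) = extend i (addConv f g) 0 := by
  have hrange (p : G × G) (hp : extend i f 0 p.1 * extend i g 0 p.2 ≠ 0) :
      ∃ q : H × H, Prod.map i i q = p := by
    have h₁ : ∃ a, i a = p.1 := by
      by_contra h
      simp [extend_apply' _ _ _ h] at hp
    have h₂ : ∃ b, i b = p.2 := by
      by_contra h
      simp [extend_apply' _ _ _ h] at hp
    obtain ⟨⟨a, ha⟩, b, hb⟩ := And.intro h₁ h₂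
    exact ⟨(a, b), Prod.ext ha hb⟩
  ext y
  by_cases hy : ∃ z, i z = y
  · obtain ⟨z, rfl⟩ := hy
    calc addConv (extend i f 0) (extend i g 0) (i z)
        = ∑ᶠ p ∈ Prod.map i i '' {q : H × H | q.1 + q.2 = z},
            extend i f 0 p.1 * extend i g 0 p.2 := by
          refine finsum_mem_inter_support_eq' _ _ _ fun p hp ↦ ?_
          obtain ⟨q, rfl⟩ := hrange p hp
          rw [(hi.prodMap hi).mem_set_image]
          simp [← map_add, hi.eq_iff]
      _ = addConv f g z := by
          rw [finsum_mem_image (hi.prodMap hi).injOn]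
          simp [addConv, hi.extend_apply]
      _ = extend i (addConv f g) 0 (i z) := (hi.extend_apply _ _ _).symm
  · rw [extend_apply' _ _ _ hy]
    refine finsum_mem_of_eqOn_zero fun p hp ↦ ?_
    by_contra hne
    obtain ⟨q, rfl⟩ := hrange p hne
    exact hy ⟨q.1 + q.2, (map_add i _ _).trans hp⟩

end Convolution

section CharIdempotent

variable {G K : Type*} [AddGroup G] [DivisionSemiring K] {H : AddSubgroup G}

/-- The idempotent `χ / |H|`, extended by zero from `H` to `G`, that a character `χ` of a finite
subgroup `H` defines in the convolution algebra of `G`. Characters are encoded as functions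
`H → K`. -/
noncomputable def charIdempotent (χ : H → K) : G → K :=
  extend (↑) (fun a ↦ (Nat.card H : K)⁻¹ * χ a) 0

lemma eq_charIdempotent {χ : H → K} {f : G → K} (hin : ∀ a : H, f a = (Nat.card H : K)⁻¹ * χ a)
    (hout : ∀ a ∉ H, f a = 0) : f = charIdempotent χ := by
  ext a
  by_cases ha : a ∈ H
  · exact (hin ⟨a, ha⟩).trans (Subtype.val_injective.extend_apply
      (fun b : H ↦ (Nat.card H : K)⁻¹ * χ b) 0 ⟨a, ha⟩).symm
  · rw [hout a ha, charIdempotent, extend_apply' _ _ _ (by simpa using ha), Pi.zero_apply]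

lemma addConv_inv_card_mul_self {A : Type*} [AddGroup A] {χ : A → K}
    (hA : (Nat.card A : K) ≠ 0) (hχ : ∀ a b, χ (a + b) = χ a * χ b) :
    addConv (fun a ↦ (Nat.card A : K)⁻¹ * χ a) (fun a ↦ (Nat.card A : K)⁻¹ * χ a) =
      fun a ↦ (Nat.card A : K)⁻¹ * χ a := by
  have : Finite A := Nat.finite_of_card_ne_zero fun h ↦ hA (by simp [h])
  ext y
  set c := (Nat.card A : K)⁻¹
  have hterm (a : A) : c * χ a * (c * χ (-a + y)) = c * (c * χ y) := by
    have hcomm : Commute (χ a) c := (Nat.commute_cast (χ a) _).inv_right₀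
    calc c * χ a * (c * χ (-a + y)) = c * (χ a * c) * χ (-a + y) := by simp only [mul_assoc]
      _ = c * (c * (χ a * χ (-a + y))) := by rw [hcomm.eq]; simp only [mul_assoc]
      _ = c * (c * χ y) := by rw [← hχ, add_neg_cancel_left]
  simp only [addConv_eq_finsum, hterm, finsum_const_of_finite, nsmul_eq_mul]
  exact mul_inv_cancel_left₀ hA _

lemma addConv_charIdempotent_self {χ : H → K} (hH : (Nat.card H : K) ≠ 0)
    (hχ : ∀ a b, χ (a + b) = χ a * χ b) :
    addConv (charIdempotent χ) (charIdempotent χ) = charIdempotent χ :=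
  (addConv_extend_zero H.subtype H.subtype_injective _ _).trans
    (congrArg (extend _ · (0 : G → K)) (addConv_inv_card_mul_self hH hχ))

lemma finsum_charIdempotent_one (hH : (Nat.card H : K) ≠ 0) :
    ∑ᶠ a, charIdempotent (1 : H → K) a = 1 := by
  have : Finite H := Nat.finite_of_card_ne_zero fun h ↦ hH (by simp [h])
  simp [charIdempotent, finsum_extend_zero Subtype.val_injective, finsum_const_of_finite, hH]

end CharIdempotent

section Pairing

variable {G₁ G₂ K : Type*} [AddGroup G₁] [AddGroup G₂] [DivisionSemiring K]

lemma pairing_equations_right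
    (H₁ : AddSubgroup G₁) (H₂ : AddSubgroup G₂) (d : ℕ) (hd : (d : K) ≠ 0) (hd2 : Nat.card H₂ = d)
    (ω : H₁ → H₂ → Kˣ)
    (hω₁ : ∀ (x x' : H₁) (y : H₂), ω (x + x') y = ω x y * ω x' y)
    (hω₂ : ∀ (x : H₁) (y y' : H₂), ω x (y + y') = ω x y * ω x y')
    (g : G₁ → G₂ → K)
    (hg : ∀ x y,
      (∀ (hx : x ∈ H₁) (hy : y ∈ H₂), g x y = (1 / (d : K)) * (ω ⟨x, hx⟩ ⟨y, hy⟩ : K)) ∧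
      (x ∉ H₁ ∨ y ∉ H₂ → g x y = 0)) :
    (∀ x y, g x y = addConv (g x) (g x) y) ∧ ∑ᶠ y, g 0 y = 1 := by
  subst hd2
  have hrow (x : H₁) : g x = charIdempotent fun y ↦ (ω x y : K) :=
    eq_charIdempotent (fun y ↦ by simpa using (hg x y).1 x.2 y.2) fun y hy ↦ (hg x y).2 (.inr hy)
  refine ⟨fun x y ↦ ?_, ?_⟩
  · by_cases hx : x ∈ H₁
    · rw [hrow ⟨x, hx⟩, addConv_charIdempotent_self hd (by simp [hω₂])]
    · have hzero : g x = 0 := funext fun y ↦ (hg x y).2 (.inl hx)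
      simp [hzero]
  · have hω0 (y : H₂) : ω 0 y = 1 := by simpa using hω₁ 0 0 y
    have hrow₀ : g 0 = charIdempotent (1 : H₂ → K) := by simpa [hω0, Pi.one_def] using hrow 0
    rw [hrow₀, finsum_charIdempotent_one hd]

theorem pairing_solution_of_group_equations_general
    (H₁ : AddSubgroup G₁) (H₂ : AddSubgroup G₂) (d : ℕ) (hd : (d : K) ≠ 0)
    (hd1 : Nat.card H₁ = d) (hd2 : Nat.card H₂ = d)
    (ω : H₁ → H₂ → Kˣ)
    (hω₁ : ∀ (x x' : H₁) (y : H₂), ω (x + x') y = ω x y * ω x' y)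
    (hω₂ : ∀ (x : H₁) (y y' : H₂), ω x (y + y') = ω x y * ω x y')
    (g : G₁ → G₂ → K)
    (hg : ∀ x y,
      (∀ (hx : x ∈ H₁) (hy : y ∈ H₂), g x y = (1 / (d : K)) * (ω ⟨x, hx⟩ ⟨y, hy⟩ : K)) ∧
      (x ∉ H₁ ∨ y ∉ H₂ → g x y = 0)) :
    (∀ x y, g x y = addConv (g x) (g x) y) ∧
    (∀ x y, g x y = addConv (g · y) (g · y) x) ∧
    (∑ᶠ y, g 0 y = 1) ∧ (∑ᶠ x, g x 0 = 1) := by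
  obtain ⟨hconv_right, hsum_right⟩ := pairing_equations_right H₁ H₂ d hd hd2 ω hω₁ hω₂ g hg
  obtain ⟨hconv_left, hsum_left⟩ := pairing_equations_right H₂ H₁ d hd hd1 (fun y x ↦ ω x y)
    (fun y y' x ↦ hω₂ x y y') (fun y x x' ↦ hω₁ x x' y) (fun y x ↦ g x y)
    fun y x ↦ ⟨fun hy hx ↦ (hg x y).1 hx hy, fun h ↦ (hg x y).2 h.symm⟩
  exact ⟨hconv_right, fun x y ↦ hconv_left y x, hsum_right, hsum_left⟩

end Pairing

/-- Let `G` be a finite abelian group, `H₁, H₂ ≤ G` subgroups of equal cardinality `d`, and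
`ω : H₁ × H₂ → ℂˣ` a pairing (multiplicative in each argument). Then
`g(x,y) = (1/d)·ω(x,y)·δ_{x ∈ H₁}·δ_{y ∈ H₂}` satisfies the group equations
`g(x,y) = ∑_{y₁+y₂=y} g(x,y₁)g(x,y₂)`, `g(x,y) = ∑_{x₁+x₂=x} g(x₁,y)g(x₂,y)`,
`∑_y g(0,y) = 1` and `∑_x g(x,0) = 1`. -/
theorem pairing_solution_of_group_equations
    {G : Type*} [AddCommGroup G] [Fintype G] [DecidableEq G]
    (H₁ H₂ : AddSubgroup G) (d : ℕ) (hd : 0 < d)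
    (hd1 : Nat.card H₁ = d) (hd2 : Nat.card H₂ = d)
    (ω : H₁ → H₂ → ℂˣ)
    (hω₁ : ∀ (x x' : H₁) (y : H₂), ω (x + x') y = ω x y * ω x' y)
    (hω₂ : ∀ (x : H₁) (y y' : H₂), ω x (y + y') = ω x y * ω x y')
    (g : G → G → ℂ)
    (hg : ∀ x y : G,
      (∀ (hx : x ∈ H₁) (hy : y ∈ H₂), g x y = (1 / (d : ℂ)) * (ω ⟨x, hx⟩ ⟨y, hy⟩ : ℂ)) ∧
      (x ∉ H₁ ∨ y ∉ H₂ → g x y = 0)) :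
    (∀ x y : G,
      g x y = ∑ p ∈ univ.filter (fun p : G × G => p.1 + p.2 = y), g x p.1 * g x p.2) ∧
    (∀ x y : G,
      g x y = ∑ p ∈ univ.filter (fun p : G × G => p.1 + p.2 = x), g p.1 y * g p.2 y) ∧
    (∑ y : G, g 0 y = 1) ∧ (∑ x : G, g x 0 = 1) := by
  simpa only [addConv_eq_sum, finsum_eq_sum_of_fintype] using
    pairing_solution_of_group_equations_general H₁ H₂ d (by exact_mod_cast hd.ne') hd1 hd2 ω
      hω₁ hω₂ g hg
end

section
/- Let N be a positive integer and let g : ℤ_N × ℤ_N → ℂ satisfy the equations: g(x,y) = Σ_{y₁+y₂=y} g(x,y₁)g(x,y₂) and g(x,y) = Σ_{x₁+x₂=x} g(x₁,y)g(x₂,y) for all x,y ∈ ℤ_N, together with Σ_{y∈ℤ_N} g(0,y) = 1 and Σ_{x∈ℤ_N} g(x,0) = 1. Then there exist a divisor d of N and a complex number ξ with ξ^d = 1 such that, writing each element of ℤ_N by its representative in {0,...,N−1}, g(x,y) = (1/d)·ξ^{(x/(N/d))·(y/(N/d))} if (N/d) | x and (N/d) | y, and g(x,y) = 0 otherwise.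 -/
open Finset

/-!
If `f = f ⋆ f` on a finite abelian group, then `f` is an orthogonal projection of the group algebra
(a normal idempotent is self-adjoint), so `f (-y) = conj (f y)`, `f 0 = ∑ z, ‖f z‖ ^ 2` and, by
Cauchy-Schwarz, `‖f y‖ ≤ f 0`. Hence `‖g x y‖ ≤ g 0 y`, and since `∑ y, g 0 y` is `0` or `1`,
every row of `g` has `ℓ¹`-norm at most `1`; likewise every column.

For an idempotent `f` of `ℓ¹`-norm at most `1`, the identity `f y = ∑ z, f z * f (y - z)` at a point
where `‖f y‖` is maximal is an equality case of the triangle inequality. It follows that `f` is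
supported on a subgroup `H`, on which it is `1 / |H|` times a character. Applied to the rows and
columns of `g`, this shows that `g` is `1 / d` times a bicharacter on a product `P × Q` of subgroups
of order `d`. In `ℤ_N` both `P` and `Q` are generated by `N / d`, and `ξ` is the value of the
bicharacter at `(N / d, N / d)`.
-/

/-- The hypotheses force equality in `‖∑ i, a i‖ ≤ ∑ i, ‖a i‖ ≤ ‖∑ i, a i‖`. -/
lemma eq_smul_sum_of_norm_le {ι E : Type*} [Fintype ι] [NormedAddCommGroup E]
    [InnerProductSpace ℝ E] {a : ι → E} {w : ι → ℝ} (hw : ∑ i, w i ≤ 1)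
    (ha : ∀ i, ‖a i‖ ≤ w i * ‖∑ j, a j‖) (i : ι) : a i = w i • ∑ j, a j := by
  set u := ∑ j, a j with hu
  have inner_le (j : ι) : inner ℝ (a j) u ≤ w j * ‖u‖ ^ 2 :=
    calc inner ℝ (a j) u ≤ ‖a j‖ * ‖u‖ := real_inner_le_norm _ _
      _ ≤ w j * ‖u‖ * ‖u‖ := by gcongr; exact ha j
      _ = w j * ‖u‖ ^ 2 := by ring
  have sum_inner_eq : ∑ j, inner ℝ (a j) u = ∑ j, w j * ‖u‖ ^ 2 := by
    refine (sum_le_sum fun j _ => inner_le j).antisymm ?_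
    rw [← sum_inner, ← hu, real_inner_self_eq_norm_sq, ← sum_mul]
    exact mul_le_of_le_one_left (sq_nonneg _) hw
  have inner_eq : inner ℝ (a i) u = w i * ‖u‖ ^ 2 :=
    (sum_eq_sum_iff_of_le fun j _ => inner_le j).1 sum_inner_eq i (mem_univ i)
  have norm_sq_le : ‖a i‖ ^ 2 ≤ (w i * ‖u‖) ^ 2 := pow_le_pow_left₀ (norm_nonneg _) (ha i) 2
  have norm_sub_sq_eq : ‖a i - w i • u‖ ^ 2 = ‖a i‖ ^ 2 - (w i * ‖u‖) ^ 2 := by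
    rw [norm_sub_sq_real, real_inner_smul_right, inner_eq, norm_smul, mul_pow, Real.norm_eq_abs,
      sq_abs]
    ring
  have norm_sub_sq_nonpos : ‖a i - w i • u‖ ^ 2 ≤ 0 :=
    norm_sub_sq_eq.trans_le (sub_nonpos.2 norm_sq_le)
  exact sub_eq_zero.1 (norm_eq_zero.1 (sq_nonpos_iff _ |>.1 norm_sub_sq_nonpos))

lemma isSelfAdjoint_of_isIdempotentElem_of_isStarNormal {R : Type*} [NonUnitalRing R] [StarRing R]
    (eq_zero_of_star_mul_self : ∀ a : R, star a * a = 0 → a = 0) {e : R} (he : IsIdempotentElem e)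
    (hnormal : IsStarNormal e) : IsSelfAdjoint e := by
  have hcomm : star e * e = e * star e := hnormal.star_comm_self.eq
  have eq_star_mul : e = star e * e := by
    refine sub_eq_zero.1 (eq_zero_of_star_mul_self _ ?_)
    have h : star e * (star e * e) = star e * e := by rw [← mul_assoc, he.star.eq]
    rw [star_sub, star_mul, star_star, mul_sub, sub_mul, sub_mul, mul_assoc, he.eq, h,
      mul_assoc, ← mul_assoc e, ← hcomm, mul_assoc, he.eq, h, sub_self]
  rw [eq_star_mul]
  exact .star_mul_self e

/-- An idempotent for the convolution of complex functions on a finite additive group, in the form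
in which it enters the group equations: the convolution is a sum over ordered pairs. -/
def IsConvIdempotent {G : Type*} [Add G] [Fintype G] [DecidableEq G] (f : G → ℂ) : Prop :=
  ∀ y, f y = ∑ p ∈ univ.filter (fun p : G × G => p.1 + p.2 = y), f p.1 * f p.2

namespace IsConvIdempotent

lemma sum_eq_zero_or_one {G : Type*} [Add G] [Fintype G] [DecidableEq G] {f : G → ℂ}
    (hf : IsConvIdempotent f) : ∑ y, f y = 0 ∨ ∑ y, f y = 1 := by
  refine IsIdempotentElem.iff_eq_zero_or_one.1 ?_
  rw [IsIdempotentElem, sum_mul_sum, ← Fintype.sum_prod_type',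
    ← sum_fiberwise univ (fun p : G × G => p.1 + p.2)]
  exact sum_congr rfl fun y _ => (hf y).symm

variable {G : Type*} [AddCommGroup G] [Fintype G] [DecidableEq G] {f : G → ℂ}

lemma eq_sum_mul_sub (hf : IsConvIdempotent f) (y : G) : f y = ∑ z, f z * f (y - z) := by
  rw [hf y]
  exact sum_bij' (fun p _ => p.1) (fun z _ => (z, y - z)) (by simp) (by simp)
    (by simp +contextual [Prod.ext_iff, ← eq_sub_iff_add_eq']) (by simp)
    (by simp +contextual [← eq_sub_iff_add_eq'])

lemma isIdempotentElem_circulant (hf : IsConvIdempotent f) :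
    IsIdempotentElem (Matrix.circulant f) := by
  rw [IsIdempotentElem, Matrix.circulant_mul]
  congr 1
  ext y
  rw [hf.eq_sum_mul_sub y, ← Equiv.sum_comp (Equiv.subLeft y)]
  simp [Matrix.mulVec, dotProduct]

open scoped ComplexOrder in
lemma map_neg (hf : IsConvIdempotent f) (y : G) : f (-y) = star (f y) := by
  have hself : IsSelfAdjoint (Matrix.circulant f) := by
    refine isSelfAdjoint_of_isIdempotentElem_of_isStarNormal
      (fun M => Matrix.conjTranspose_mul_self_eq_zero.1) hf.isIdempotentElem_circulant ⟨?_⟩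
    rw [Matrix.star_eq_conjTranspose, Matrix.conjTranspose_circulant]
    exact Matrix.circulant_mul_comm _ _
  simpa using (congrFun₂ hself 0 y).symm

lemma norm_map_neg (hf : IsConvIdempotent f) (y : G) : ‖f (-y)‖ = ‖f y‖ := by
  rw [hf.map_neg, norm_star]

lemma map_zero_eq_sum_norm_sq (hf : IsConvIdempotent f) : f 0 = (∑ z, ‖f z‖ ^ 2 : ℝ) := by
  rw [hf.eq_sum_mul_sub 0]
  push_cast
  exact sum_congr rfl fun z _ => by rw [zero_sub, hf.map_neg]; exact Complex.mul_conj' _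

lemma norm_map_zero_eq_sum_norm_sq (hf : IsConvIdempotent f) : ‖f 0‖ = ∑ z, ‖f z‖ ^ 2 := by
  rw [hf.map_zero_eq_sum_norm_sq, Complex.norm_of_nonneg (by positivity)]

lemma coe_norm_map_zero (hf : IsConvIdempotent f) : (‖f 0‖ : ℂ) = f 0 := by
  rw [hf.norm_map_zero_eq_sum_norm_sq, hf.map_zero_eq_sum_norm_sq]

lemma norm_le_norm_map_zero (hf : IsConvIdempotent f) (y : G) : ‖f y‖ ≤ ‖f 0‖ :=
  calc ‖f y‖ = ‖∑ z, f z * f (y - z)‖ := by rw [← hf.eq_sum_mul_sub]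
    _ ≤ ∑ z, ‖f z‖ * ‖f (y - z)‖ := by simpa using norm_sum_le univ fun z => f z * f (y - z)
    _ ≤ ∑ z, (‖f z‖ ^ 2 + ‖f (y - z)‖ ^ 2) / 2 :=
      sum_le_sum fun z _ => by linarith [two_mul_le_add_sq ‖f z‖ ‖f (y - z)‖]
    _ = ‖f 0‖ := by
      have hsub : ∑ z, ‖f (y - z)‖ ^ 2 = ∑ z, ‖f z‖ ^ 2 :=
        Equiv.sum_comp (Equiv.subLeft y) fun z => ‖f z‖ ^ 2
      rw [← sum_div, sum_add_distrib, hsub, ← hf.norm_map_zero_eq_sum_norm_sq, add_self_div_two]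

lemma mul_map_sub_of_norm_eq (hf : IsConvIdempotent f) (hle : ∑ y, ‖f y‖ ≤ 1) {y : G}
    (hy : ‖f y‖ = ‖f 0‖) (z : G) : f z * f (y - z) = ‖f z‖ * f y := by
  have := eq_smul_sum_of_norm_le (a := fun z => f z * f (y - z)) hle (fun z => ?_) z
  · rwa [← hf.eq_sum_mul_sub, Complex.real_smul] at this
  · rw [← hf.eq_sum_mul_sub, hy, norm_mul]
    gcongr
    exact hf.norm_le_norm_map_zero _

lemma norm_eq_of_ne_zero (hf : IsConvIdempotent f) (hle : ∑ y, ‖f y‖ ≤ 1) {y : G}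
    (hy : f y ≠ 0) : ‖f y‖ = ‖f 0‖ := by
  have h := congrArg norm (hf.mul_map_sub_of_norm_eq hle rfl y)
  rw [zero_sub, norm_mul, norm_mul, hf.norm_map_neg, Complex.norm_real, norm_norm] at h
  exact mul_left_cancel₀ (norm_ne_zero_iff.2 hy) h

lemma map_mul_map (hf : IsConvIdempotent f) (hle : ∑ y, ‖f y‖ ≤ 1) {y z : G}
    (hy : f y ≠ 0) (hz : f z ≠ 0) : f y * f z = f 0 * f (y + z) := by
  have h0 : f 0 ≠ 0 := norm_ne_zero_iff.1 (hf.norm_eq_of_ne_zero hle hy ▸ norm_ne_zero_iff.2 hy)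
  have hz' : f (-z) ≠ 0 := norm_ne_zero_iff.1 (hf.norm_map_neg z ▸ norm_ne_zero_iff.2 hz)
  have factor {v w : G} (hv : f v ≠ 0) (hw : f w ≠ 0) : f w * f (v - w) = f 0 * f v := by
    rw [hf.mul_map_sub_of_norm_eq hle (hf.norm_eq_of_ne_zero hle hv),
      hf.norm_eq_of_ne_zero hle hw, hf.coe_norm_map_zero]
  have hyz : f (y + z) ≠ 0 := by
    have := factor hy hz'
    rw [sub_neg_eq_add] at this
    exact right_ne_zero_of_mul (this.trans_ne (mul_ne_zero h0 hy))
  simpa [mul_comm] using factor hyz hz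

lemma sum_norm_eq_one (hf : IsConvIdempotent f) (hle : ∑ y, ‖f y‖ ≤ 1) (h0 : f 0 ≠ 0) :
    ∑ y, ‖f y‖ = 1 := by
  have norm_sq_eq (y : G) : ‖f y‖ ^ 2 = ‖f y‖ * ‖f 0‖ := by
    rcases eq_or_ne (f y) 0 with hy | hy
    · simp [hy]
    · rw [sq, hf.norm_eq_of_ne_zero hle hy]
  have h := hf.norm_map_zero_eq_sum_norm_sq
  simp only [norm_sq_eq, ← sum_mul] at h
  exact (right_eq_mul₀ (norm_ne_zero_iff.2 h0)).1 h

lemma exists_addSubgroup_support (hf : IsConvIdempotent f) (hle : ∑ y, ‖f y‖ ≤ 1) (h0 : f 0 ≠ 0) :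
    ∃ H : AddSubgroup G, (∀ y, y ∈ H ↔ f y ≠ 0) ∧ f 0 = (Nat.card H : ℂ)⁻¹ := by
  let H : AddSubgroup G :=
    { carrier := {y | f y ≠ 0}
      zero_mem' := h0
      add_mem' := fun ha hb => right_ne_zero_of_mul
        ((hf.map_mul_map hle ha hb).symm.trans_ne (mul_ne_zero ha hb))
      neg_mem' := fun {a} ha => norm_ne_zero_iff.1 (hf.norm_map_neg a ▸ norm_ne_zero_iff.2 ha) }
  refine ⟨H, fun _ => Iff.rfl, eq_inv_of_mul_eq_one_right ?_⟩
  have norm_eq (y : G) : ‖f y‖ = if f y ≠ 0 then ‖f 0‖ else 0 := by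
    split_ifs with hy
    · exact hf.norm_eq_of_ne_zero hle hy
    · rw [not_not.1 hy, norm_zero]
  have hcard : Nat.card H = #{y | f y ≠ 0} := Nat.subtype_card _ (by simp [H])
  have hsum := hf.sum_norm_eq_one hle h0
  rw [sum_congr rfl fun y _ => norm_eq y, ← sum_filter, sum_const, nsmul_eq_mul, ← hcard] at hsum
  rw [← hf.coe_norm_map_zero]
  exact_mod_cast hsum

end IsConvIdempotent

/-- The two convolution equations on a function of two variables: every row and every column is a
convolution idempotent. -/
structure IsBiconvIdempotent {A B : Type*} [Add A] [Fintype A] [DecidableEq A] [Add B] [Fintype B]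
    [DecidableEq B] (g : A → B → ℂ) : Prop where
  row (x : A) : IsConvIdempotent (g x)
  col (y : B) : IsConvIdempotent fun x => g x y

namespace IsBiconvIdempotent

variable {A B : Type*} [AddCommGroup A] [Fintype A] [DecidableEq A] [AddCommGroup B] [Fintype B]
  [DecidableEq B] {g : A → B → ℂ}

lemma swap (hg : IsBiconvIdempotent g) : IsBiconvIdempotent fun y x => g x y := ⟨hg.col, hg.row⟩

lemma norm_le_norm_row_zero (hg : IsBiconvIdempotent g) (x : A) (y : B) : ‖g x y‖ ≤ ‖g x 0‖ :=
  (hg.row x).norm_le_norm_map_zero y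

lemma norm_le_norm_col_zero (hg : IsBiconvIdempotent g) (x : A) (y : B) : ‖g x y‖ ≤ ‖g 0 y‖ :=
  hg.swap.norm_le_norm_row_zero y x

lemma sum_norm_row_le_one (hg : IsBiconvIdempotent g) (x : A) : ∑ y, ‖g x y‖ ≤ 1 :=
  calc ∑ y, ‖g x y‖ ≤ ∑ y, ‖g 0 y‖ := sum_le_sum fun y _ => hg.norm_le_norm_col_zero x y
    _ = ‖∑ y, g 0 y‖ := by
      have : ∑ y, g 0 y = (∑ y, ‖g 0 y‖ : ℝ) := by
        push_cast
        exact sum_congr rfl fun y _ => (hg.col y).coe_norm_map_zero.symm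
      rw [this, Complex.norm_of_nonneg (by positivity)]
    _ ≤ 1 := by rcases (hg.row 0).sum_eq_zero_or_one with h | h <;> simp [h]

lemma map_zero_zero_ne_zero (hg : IsBiconvIdempotent g) (h : g ≠ 0) : g 0 0 ≠ 0 := by
  contrapose! h
  ext x y
  have := (hg.norm_le_norm_row_zero x y).trans (hg.norm_le_norm_col_zero x 0)
  simpa [h] using this

lemma norm_eq_of_row_zero_ne_zero (hg : IsBiconvIdempotent g) {x : A} (hx : g x 0 ≠ 0) (y : B) :
    ‖g x y‖ = ‖g 0 y‖ := by
  have h0 : g 0 0 ≠ 0 := hg.map_zero_zero_ne_zero fun h => hx (by simp [h])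
  have hsum : ∑ y, ‖g x y‖ = ∑ y, ‖g 0 y‖ := by
    rw [(hg.row x).sum_norm_eq_one (hg.sum_norm_row_le_one x) hx,
      (hg.row 0).sum_norm_eq_one (hg.sum_norm_row_le_one 0) h0]
  exact (sum_eq_sum_iff_of_le fun y _ => hg.norm_le_norm_col_zero x y).1 hsum y (mem_univ y)

lemma ne_zero_iff (hg : IsBiconvIdempotent g) {x : A} {y : B} :
    g x y ≠ 0 ↔ g x 0 ≠ 0 ∧ g 0 y ≠ 0 := by
  simp only [← norm_pos_iff]
  constructor
  · exact fun h => ⟨h.trans_le (hg.norm_le_norm_row_zero x y),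
      h.trans_le (hg.norm_le_norm_col_zero x y)⟩
  · rintro ⟨hx, hy⟩
    rwa [hg.norm_eq_of_row_zero_ne_zero (norm_pos_iff.1 hx)]

lemma row_zero_eq (hg : IsBiconvIdempotent g) {x : A} (hx : g x 0 ≠ 0) : g x 0 = g 0 0 := by
  rw [← (hg.row x).coe_norm_map_zero, hg.norm_eq_of_row_zero_ne_zero hx,
    (hg.row 0).coe_norm_map_zero]

lemma row_mul_row (hg : IsBiconvIdempotent g) {x : A} {y z : B} (hx : g x 0 ≠ 0)
    (hy : g 0 y ≠ 0) (hz : g 0 z ≠ 0) : g x y * g x z = g 0 0 * g x (y + z) := by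
  rw [← hg.row_zero_eq hx]
  exact (hg.row x).map_mul_map (hg.sum_norm_row_le_one x) (hg.ne_zero_iff.2 ⟨hx, hy⟩)
    (hg.ne_zero_iff.2 ⟨hx, hz⟩)

lemma exists_bicharacter (hg : IsBiconvIdempotent g) {P : AddSubgroup A} {Q : AddSubgroup B}
    (h0 : g 0 0 ≠ 0) (hP : ∀ x ∈ P, g x 0 ≠ 0) (hQ : ∀ y ∈ Q, g 0 y ≠ 0) :
    ∃ β : AddChar P (AddChar Q ℂ), ∀ (x : P) (y : Q), g x y = g 0 0 * β x y := by
  let character (x : P) : AddChar Q ℂ :=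
    { toFun := fun y => g x y / g 0 0
      map_zero_eq_one' := by
        rw [ZeroMemClass.coe_zero, hg.row_zero_eq (hP x x.2), div_self h0]
      map_add_eq_mul' := fun y z => by
        have := hg.row_mul_row (hP x x.2) (hQ y y.2) (hQ z z.2)
        rw [AddSubgroup.coe_add, div_mul_div_comm, this, mul_div_mul_left _ _ h0] }
  let β : AddChar P (AddChar Q ℂ) :=
    { toFun := character
      map_zero_eq_one' := by
        ext y
        simpa [character, hg.swap.row_zero_eq (hQ y y.2)] using h0
      map_add_eq_mul' := fun x z => by
        ext y
        have := hg.swap.row_mul_row (hQ y y.2) (hP x x.2) (hP z z.2)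
        change g (x + z : P) y / g 0 0 = g x y / g 0 0 * (g z y / g 0 0)
        rw [AddSubgroup.coe_add, div_mul_div_comm, this, mul_div_mul_left _ _ h0] }
  exact ⟨β, fun x y => (mul_div_cancel₀ _ h0).symm⟩

end IsBiconvIdempotent

/-- The bicharacter `β` of `P × Q` is encoded as a character of `P` with values in the characters
of `Q`. -/
theorem cyclic_solutions_of_group_equations_general {A B : Type*} [AddCommGroup A] [Fintype A]
    [DecidableEq A] [AddCommGroup B] [Fintype B] [DecidableEq B] {g : A → B → ℂ}
    (hg : IsBiconvIdempotent g) (hne : g ≠ 0) :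
    ∃ (P : AddSubgroup A) (Q : AddSubgroup B) (β : AddChar P (AddChar Q ℂ)),
      Nat.card Q = Nat.card P ∧ (∀ (x : P) (y : Q), g x y = (Nat.card P : ℂ)⁻¹ * β x y) ∧
        ∀ x y, g x y ≠ 0 → x ∈ P ∧ y ∈ Q := by
  have h0 : g 0 0 ≠ 0 := hg.map_zero_zero_ne_zero hne
  obtain ⟨P, hP, hPcard⟩ :=
    (hg.col 0).exists_addSubgroup_support (hg.swap.sum_norm_row_le_one 0) h0
  obtain ⟨Q, hQ, hQcard⟩ := (hg.row 0).exists_addSubgroup_support (hg.sum_norm_row_le_one 0) h0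
  obtain ⟨β, hβ⟩ := hg.exists_bicharacter h0 (fun x => (hP x).1) (fun y => (hQ y).1)
  refine ⟨P, Q, β, ?_, fun x y => hPcard ▸ hβ x y, fun x y hxy => ?_⟩
  · exact_mod_cast inv_inj.1 (hQcard.symm.trans hPcard)
  · rw [hP, hQ]
    exact hg.ne_zero_iff.1 hxy

lemma mem_iff_card_nsmul_eq_zero {G : Type*} [AddCommGroup G] [IsAddCyclic G] [Finite G]
    (H : AddSubgroup G) (x : G) : x ∈ H ↔ Nat.card H • x = 0 := by
  have hle : H ≤ (nsmulAddMonoidHom (Nat.card H) : G →+ G).ker := fun a ha =>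
    congrArg Subtype.val (card_nsmul_eq_zero' (x := (⟨a, ha⟩ : H)))
  have hcard : Nat.card (nsmulAddMonoidHom (Nat.card H) : G →+ G).ker = Nat.card H := by
    rw [IsAddCyclic.card_nsmulAddMonoidHom_ker, Nat.gcd_eq_right H.card_addSubgroup_dvd_card]
  conv_lhs => rw [AddSubgroup.eq_of_le_of_card_ge hle hcard.le]
  rfl

section ZMod

lemma card_addSubgroup_zmod_dvd {N : ℕ} (H : AddSubgroup (ZMod N)) : Nat.card H ∣ N := by
  simpa using H.card_addSubgroup_dvd_card

variable {N : ℕ} [NeZero N]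

lemma mem_addSubgroup_zmod_iff_dvd_val (H : AddSubgroup (ZMod N)) (x : ZMod N) :
    x ∈ H ↔ N / Nat.card H ∣ x.val := by
  have hcast : Nat.card H • x = ((Nat.card H * x.val : ℕ) : ZMod N) := by simp
  rw [mem_iff_card_nsmul_eq_zero, hcast, ZMod.natCast_eq_zero_iff,
    Nat.div_dvd_iff_dvd_mul (card_addSubgroup_zmod_dvd H) Nat.card_pos]

lemma natCast_div_card_mem (H : AddSubgroup (ZMod N)) : ((N / Nat.card H : ℕ) : ZMod N) ∈ H := by
  rw [mem_iff_card_nsmul_eq_zero, nsmul_eq_mul, ← Nat.cast_mul,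
    Nat.mul_div_cancel' (card_addSubgroup_zmod_dvd H), ZMod.natCast_self]

lemma val_div_nsmul_natCast_div_card (H : AddSubgroup (ZMod N)) (x : H) :
    ((x : ZMod N).val / (N / Nat.card H)) •
      (⟨((N / Nat.card H : ℕ) : ZMod N), natCast_div_card_mem H⟩ : H) = x := by
  ext
  rw [AddSubgroup.coe_nsmul, nsmul_eq_mul, ← Nat.cast_mul,
    Nat.div_mul_cancel ((mem_addSubgroup_zmod_iff_dvd_val H x).1 x.2), ZMod.natCast_zmod_val]

lemma exists_bicharacter_eq_pow {P Q : AddSubgroup (ZMod N)} (β : AddChar P (AddChar Q ℂ)) :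
    ∃ ξ : ℂ, ξ ^ Nat.card P = 1 ∧ ∀ (x : P) (y : Q), β x y =
      ξ ^ ((x : ZMod N).val / (N / Nat.card P) * ((y : ZMod N).val / (N / Nat.card Q))) := by
  let u : P := ⟨_, natCast_div_card_mem P⟩
  let v : Q := ⟨_, natCast_div_card_mem Q⟩
  have map_nsmul_nsmul (a b : ℕ) : β (a • u) (b • v) = β u v ^ (a * b) := by
    rw [AddChar.map_nsmul_eq_pow, AddChar.map_nsmul_eq_pow, AddChar.pow_apply, ← pow_mul]
  refine ⟨β u v, ?_, fun x y => ?_⟩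
  · rw [← AddChar.pow_apply, ← AddChar.map_nsmul_eq_pow, card_nsmul_eq_zero',
      AddChar.map_zero_eq_one, AddChar.one_apply]
  · rw [← map_nsmul_nsmul, val_div_nsmul_natCast_div_card, val_div_nsmul_natCast_div_card]

lemma exists_eq_ite_pow_of_bicharacter {g : ZMod N → ZMod N → ℂ} {P Q : AddSubgroup (ZMod N)}
    {β : AddChar P (AddChar Q ℂ)} (hcard : Nat.card Q = Nat.card P)
    (hβ : ∀ (x : P) (y : Q), g x y = (Nat.card P : ℂ)⁻¹ * β x y)
    (hsupp : ∀ x y, g x y ≠ 0 → x ∈ P ∧ y ∈ Q) :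
    ∃ d : ℕ, d ∣ N ∧ ∃ ξ : ℂ, ξ ^ d = 1 ∧
      ∀ x y : ZMod N,
        g x y = if (N / d) ∣ x.val ∧ (N / d) ∣ y.val
          then (1 / (d : ℂ)) * ξ ^ ((x.val / (N / d)) * (y.val / (N / d)))
          else 0 := by
  obtain ⟨ξ, hξ, hpow⟩ := exists_bicharacter_eq_pow β
  refine ⟨Nat.card P, card_addSubgroup_zmod_dvd P, ξ, hξ, fun x y => ?_⟩
  have hmem : N / Nat.card P ∣ x.val ∧ N / Nat.card P ∣ y.val ↔ x ∈ P ∧ y ∈ Q := by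
    rw [mem_addSubgroup_zmod_iff_dvd_val, mem_addSubgroup_zmod_iff_dvd_val, hcard]
  split_ifs with h
  · obtain ⟨hx, hy⟩ := hmem.1 h
    rw [one_div, hβ ⟨x, hx⟩ ⟨y, hy⟩, hpow, hcard]
  · exact not_not.1 fun hne => h (hmem.2 (hsupp x y hne))

end ZMod

/-- Every solution `g : ℤ_N × ℤ_N → ℂ` of the group equations
`g(x,y) = ∑_{y₁+y₂=y} g(x,y₁)g(x,y₂)`, `g(x,y) = ∑_{x₁+x₂=x} g(x₁,y)g(x₂,y)`,
`∑_y g(0,y) = 1`, `∑_x g(x,0) = 1` is of the form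
`g(x,y) = (1/d)·ξ^{(x/(N/d))·(y/(N/d))}` if `(N/d) ∣ x` and `(N/d) ∣ y` (representatives in
`{0,…,N−1}`), and `0` otherwise, for some divisor `d ∣ N` and some `ξ ∈ ℂ` with `ξ^d = 1`. -/
theorem cyclic_solutions_of_group_equations
    (N : ℕ) [NeZero N] (g : ZMod N → ZMod N → ℂ)
    (h1 : ∀ x y : ZMod N,
      g x y = ∑ p ∈ univ.filter (fun p : ZMod N × ZMod N => p.1 + p.2 = y),
        g x p.1 * g x p.2)
    (h2 : ∀ x y : ZMod N,
      g x y = ∑ p ∈ univ.filter (fun p : ZMod N × ZMod N => p.1 + p.2 = x),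
        g p.1 y * g p.2 y)
    (h3 : ∑ y : ZMod N, g 0 y = 1)
    (h4 : ∑ x : ZMod N, g x 0 = 1) :
    ∃ d : ℕ, d ∣ N ∧ ∃ ξ : ℂ, ξ ^ d = 1 ∧
      ∀ x y : ZMod N,
        g x y = if (N / d) ∣ x.val ∧ (N / d) ∣ y.val
          then (1 / (d : ℂ)) * ξ ^ ((x.val / (N / d)) * (y.val / (N / d)))
          else 0 := by
  have hne : g ≠ 0 := by
    rintro rfl
    simp at h3
  obtain ⟨P, Q, β, hcard, hβ, hsupp⟩ :=
    cyclic_solutions_of_group_equations_general ⟨h1, fun y x => h2 x y⟩ hne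
  exact exists_eq_ite_pow_of_bicharacter hcard hβ hsupp
end
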